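/- Let 0 < t < π and define J(θ) = ∫₀¹ θ'(z)² − t² cos²θ(z) dz on 𝒞 = {θ ∈ W^{1,2}(0,1) : θ(0) = θ(1) = π/2}. Then the constant function θ ≡ π/2 is a strict weak local minimizer of J: there is ε > 0 such that J(θ) > J(π/2) = −? in fact J(θ) > 0 = J(π/2) for every θ ∈ 𝒞 with 0 < ‖θ − π/2‖_{W^{1,∞}} < ε. -/

import Mathlib

open Set MeasureTheory Real

noncomputable section

/-- `J(θ) = ∫₀¹ θ'(z)² − t² cos²θ(z) dz`. -/
def Jfun (t : ℝ) (θ : ℝ → ℝ) : ℝ :=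
  ∫ z in (0 : ℝ)..1, ((deriv θ z) ^ 2 - t ^ 2 * Real.cos (θ z) ^ 2)

/-- Membership in `𝒞 = {θ ∈ W^{1,2}(0,1) : θ(0) = θ(1) = π/2}`:
`θ` is (absolutely) continuous on `[0,1]` with square-integrable derivative and
the boundary values `π/2`. -/
def MemC (θ : ℝ → ℝ) : Prop :=
  ContinuousOn θ (Icc (0 : ℝ) 1) ∧
  IntegrableOn (fun z => (deriv θ z) ^ 2) (Ioo (0 : ℝ) 1) volume ∧
  (∀ z ∈ Icc (0 : ℝ) 1, θ z = θ 0 + ∫ s in (0 : ℝ)..z, deriv θ s) ∧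
  θ 0 = π / 2 ∧ θ 1 = π / 2

/-- The `W^{1,∞}(0,1)` distance of `θ` to the constant `π/2`. -/
def w1infDist (θ : ℝ → ℝ) : ℝ :=
  (⨆ z ∈ Icc (0 : ℝ) 1, |θ z - π / 2|) + ⨆ z ∈ Icc (0 : ℝ) 1, |deriv θ z|

/-!
Put `F = θ - π / 2`, so that `F` vanishes at `0` and `1` and
`J(θ) = ∫ F'² - t² sin² F`. Since `sin² F ≤ F²`, strictly where `F ≠ 0`, positivity of `J` for
`|t| ≤ π` follows from Wirtinger's inequality `π² ∫ F² ≤ ∫ F'²`.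

Wirtinger's inequality is obtained by Legendre's device. If `g' = s² + g²` on `[a, b]`, then
`F'² - s² F² = (F' + g F)² - (g F²)'`, and the last term integrates to zero. For
`s (b - a) < π` the function `g(x) = s tan (s (x - (a + b) / 2))` is such a solution, and the sharp
constant comes from letting `s` tend to `π / (b - a)`.
-/

section Interval

variable {a b : ℝ}

theorem absolutelyContinuousOnInterval_congr {X : Type*} [PseudoMetricSpace X] {f g : ℝ → X}
    (hf : AbsolutelyContinuousOnInterval f a b) (hfg : EqOn f g (uIcc a b)) :
    AbsolutelyContinuousOnInterval g a b := by
  rw [absolutelyContinuousOnInterval_iff] at hf ⊢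
  intro ε hε
  obtain ⟨δ, hδ, hlt⟩ := hf ε hε
  refine ⟨δ, hδ, fun E hE hEδ => ?_⟩
  convert hlt E hE hEδ using 1
  refine Finset.sum_congr rfl fun i hi => ?_
  rw [hfg (hE.1 i hi).1, hfg (hE.1 i hi).2]

variable {F : ℝ → ℝ}

theorem integral_sq_deriv_add_mul {g : ℝ → ℝ}
    (hF : AbsolutelyContinuousOnInterval F a b) (hg : AbsolutelyContinuousOnInterval g a b)
    (hF' : IntervalIntegrable (fun x => deriv F x ^ 2) volume a b) :
    ∫ x in a..b, (deriv F x + g x * F x) ^ 2 =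
      (∫ x in a..b, (deriv F x ^ 2 - (deriv g x - g x ^ 2) * F x ^ 2)) +
        (g b * F b ^ 2 - g a * F a ^ 2) := by
  have hFF : AbsolutelyContinuousOnInterval (F * F) a b := hF.mul hF
  have hpot : IntervalIntegrable
      (fun x => deriv F x ^ 2 - (deriv g x - g x ^ 2) * F x ^ 2) volume a b :=
    hF'.sub ((hg.intervalIntegrable_deriv.sub
      (hg.continuousOn.pow 2).intervalIntegrable).mul_continuousOn (hF.continuousOn.pow 2))
  have hprod : IntervalIntegrable
      (fun x => deriv g x * (F * F) x + g x * deriv (F * F) x) volume a b :=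
    (hg.intervalIntegrable_deriv.mul_continuousOn hFF.continuousOn).add
      (hFF.intervalIntegrable_deriv.continuousOn_mul hg.continuousOn)
  have hboundary : ∫ x in a..b, (deriv g x * (F * F) x + g x * deriv (F * F) x) =
      g b * F b ^ 2 - g a * F a ^ 2 := by
    rw [hg.integral_deriv_mul_eq_sub hFF]
    simp only [Pi.mul_apply, sq]
  rw [← hboundary, ← intervalIntegral.integral_add hpot hprod]
  refine intervalIntegral.integral_congr_ae ?_
  filter_upwards [hF.ae_differentiableAt] with x hdiff hx
  have hFx := (hdiff (uIoc_subset_uIcc hx)).hasDerivAt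
  rw [(hFx.mul hFx).deriv, Pi.mul_apply]
  ring

theorem cos_mul_sub_midpoint_pos {s x : ℝ} (hs : 0 ≤ s) (hsab : s * (b - a) < π)
    (hx : x ∈ Icc a b) : 0 < cos (s * (x - (a + b) / 2)) := by
  have hleft : 0 ≤ s * (x - a) := mul_nonneg hs (sub_nonneg.2 hx.1)
  have hright : 0 ≤ s * (b - x) := mul_nonneg hs (sub_nonneg.2 hx.2)
  exact cos_pos_of_mem_Ioo ⟨by linarith, by linarith⟩

theorem hasDerivAt_mul_tan_mul_sub {s c x : ℝ} (hcos : cos (s * (x - c)) ≠ 0) :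
    HasDerivAt (fun x => s * tan (s * (x - c))) (s ^ 2 + (s * tan (s * (x - c))) ^ 2) x := by
  have hlin : HasDerivAt (fun x : ℝ => s * (x - c)) (s * 1) x :=
    ((hasDerivAt_id x).sub_const c).const_mul s
  refine (((hasDerivAt_tan hcos).comp x hlin).const_mul s).congr_deriv ?_
  rw [one_div, ← inv_one_add_tan_sq hcos, inv_inv]
  ring

theorem sq_mul_integral_sq_le_integral_sq_deriv {s : ℝ} (hab : a ≤ b) (hs : 0 ≤ s)
    (hsab : s * (b - a) < π) (hF : AbsolutelyContinuousOnInterval F a b)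
    (hF' : IntervalIntegrable (fun x => deriv F x ^ 2) volume a b) (ha : F a = 0) (hb : F b = 0) :
    s ^ 2 * ∫ x in a..b, F x ^ 2 ≤ ∫ x in a..b, deriv F x ^ 2 := by
  set g : ℝ → ℝ := fun x => s * tan (s * (x - (a + b) / 2))
  have hcos : ∀ x ∈ uIcc a b, cos (s * (x - (a + b) / 2)) ≠ 0 := fun x hx =>
    (cos_mul_sub_midpoint_pos hs hsab (uIcc_of_le hab ▸ hx)).ne'
  have hriccati : ∀ x ∈ uIcc a b, deriv g x - g x ^ 2 = s ^ 2 := fun x hx => by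
    rw [(hasDerivAt_mul_tan_mul_sub (hcos x hx)).deriv, add_sub_cancel_right]
  have hg : AbsolutelyContinuousOnInterval g a b := by
    refine ContDiffOn.absolutelyContinuousOnInterval fun x hx => ContDiffAt.contDiffWithinAt ?_
    exact contDiffAt_const.mul ((contDiffAt_tan.2 (hcos x hx)).comp x
      (f := fun x => s * (x - (a + b) / 2)) (by fun_prop))
  have hF2 : IntervalIntegrable (fun x => F x ^ 2) volume a b :=
    (hF.continuousOn.pow 2).intervalIntegrable
  have hsquare : ∫ x in a..b, (deriv F x + g x * F x) ^ 2 =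
      (∫ x in a..b, deriv F x ^ 2) - s ^ 2 * ∫ x in a..b, F x ^ 2 := by
    rw [integral_sq_deriv_add_mul hF hg hF', ha, hb,
      ← intervalIntegral.integral_const_mul, ← intervalIntegral.integral_sub hF' (hF2.const_mul _)]
    simp only [ne_eq, OfNat.ofNat_ne_zero, not_false_eq_true, zero_pow, mul_zero, sub_zero,
      add_zero]
    refine intervalIntegral.integral_congr fun x hx => ?_
    simp only [hriccati x hx]
  refine sub_nonneg.1 (hsquare ▸ ?_)
  exact intervalIntegral.integral_nonneg hab fun x _ => sq_nonneg _

theorem wirtinger_inequality (hab : a ≤ b) (hF : AbsolutelyContinuousOnInterval F a b)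
    (hF' : IntervalIntegrable (fun x => deriv F x ^ 2) volume a b) (ha : F a = 0) (hb : F b = 0) :
    π ^ 2 * ∫ x in a..b, F x ^ 2 ≤ (b - a) ^ 2 * ∫ x in a..b, deriv F x ^ 2 := by
  rcases hab.eq_or_lt with rfl | hlt
  · simp only [intervalIntegral.integral_same, mul_zero, le_refl]
  have hlen : 0 < b - a := sub_pos.2 hlt
  have hlimit : Filter.Tendsto (fun s => s ^ 2 * ∫ x in a..b, F x ^ 2)
      (nhdsWithin (π / (b - a)) (Iio (π / (b - a))))
      (nhds ((π / (b - a)) ^ 2 * ∫ x in a..b, F x ^ 2)) :=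
    Continuous.tendsto' (by fun_prop) _ _ rfl |>.mono_left nhdsWithin_le_nhds
  have hle : (π / (b - a)) ^ 2 * ∫ x in a..b, F x ^ 2 ≤ ∫ x in a..b, deriv F x ^ 2 := by
    refine le_of_tendsto hlimit ?_
    filter_upwards [Ico_mem_nhdsLT (div_pos pi_pos hlen)] with s hs
    exact sq_mul_integral_sq_le_integral_sq_deriv hab hs.1 ((lt_div_iff₀ hlen).1 hs.2)
      hF hF' ha hb
  rwa [div_pow, div_mul_eq_mul_div, div_le_iff₀' (by positivity)] at hle

theorem integral_sin_sq_lt_integral_sq (hab : a < b) (hF : ContinuousOn F (Icc a b))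
    (hne : ∃ x ∈ Icc a b, F x ≠ 0) :
    ∫ x in a..b, sin (F x) ^ 2 < ∫ x in a..b, F x ^ 2 := by
  obtain ⟨c, hc, hFc⟩ := hne
  exact intervalIntegral.integral_lt_integral_of_continuousOn_of_le_of_exists_lt hab
    ((continuous_sin.comp_continuousOn hF).pow 2) (hF.pow 2)
    (fun _ _ => sin_sq_le_sq) ⟨c, hc, sin_sq_lt_sq hFc⟩

end Interval

namespace MemC

variable {θ : ℝ → ℝ}

theorem intervalIntegrable_sq_deriv (hθ : MemC θ) :
    IntervalIntegrable (fun z => deriv θ z ^ 2) volume 0 1 :=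
  (intervalIntegrable_iff_integrableOn_Ioo_of_le zero_le_one).2 hθ.2.1

theorem intervalIntegrable_deriv (hθ : MemC θ) : IntervalIntegrable (deriv θ) volume 0 1 :=
  (intervalIntegrable_iff_integrableOn_Ioo_of_le zero_le_one).2
    (((memLp_two_iff_integrable_sq (aestronglyMeasurable_deriv θ _)).2 hθ.2.1).integrable
      one_le_two)

theorem absolutelyContinuousOnInterval_sub_pi_div_two (hθ : MemC θ) :
    AbsolutelyContinuousOnInterval (fun z => θ z - π / 2) 0 1 := by
  refine absolutelyContinuousOnInterval_congr
    (hθ.intervalIntegrable_deriv.absolutelyContinuousOnInterval_intervalIntegral left_mem_uIcc)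
    fun z hz => ?_
  rw [uIcc_of_le zero_le_one] at hz
  rw [hθ.2.2.1 z hz, hθ.2.2.2.1, add_sub_cancel_left]

theorem Jfun_eq (hθ : MemC θ) (t : ℝ) :
    Jfun t θ =
      (∫ z in (0 : ℝ)..1, deriv θ z ^ 2) - t ^ 2 * ∫ z in (0 : ℝ)..1, sin (θ z - π / 2) ^ 2 := by
  have hcos : IntervalIntegrable (fun z => cos (θ z) ^ 2) volume 0 1 :=
    ((continuous_cos.comp_continuousOn hθ.1).pow 2).intervalIntegrable_of_Icc zero_le_one
  simp only [sin_sub_pi_div_two, neg_sq]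
  rw [Jfun, intervalIntegral.integral_sub hθ.intervalIntegrable_sq_deriv (hcos.const_mul _),
    intervalIntegral.integral_const_mul]

theorem pi_sq_mul_integral_sq_le (hθ : MemC θ) :
    π ^ 2 * ∫ z in (0 : ℝ)..1, (θ z - π / 2) ^ 2 ≤ ∫ z in (0 : ℝ)..1, deriv θ z ^ 2 := by
  have h := wirtinger_inequality zero_le_one hθ.absolutelyContinuousOnInterval_sub_pi_div_two
    (by simpa only [deriv_sub_const] using hθ.intervalIntegrable_sq_deriv)
    (sub_eq_zero.2 hθ.2.2.2.1) (sub_eq_zero.2 hθ.2.2.2.2)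
  simpa only [deriv_sub_const, sub_zero, one_pow, one_mul] using h

end MemC

theorem deriv_eq_zero_of_eqOn_const {𝕜 E : Type*} [NontriviallyNormedField 𝕜]
    [NormedAddCommGroup E] [NormedSpace 𝕜 E] {f : 𝕜 → E} {s : Set 𝕜} {c : E} {x : 𝕜}
    (hf : ∀ y ∈ s, f y = c) (hs : UniqueDiffWithinAt 𝕜 s x) (hx : x ∈ s) : deriv f x = 0 := by
  by_cases hdiff : DifferentiableAt 𝕜 f x
  · rw [← hdiff.derivWithin hs, derivWithin_congr hf (hf x hx), derivWithin_fun_const,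
      Pi.zero_apply]
  · exact deriv_zero_of_not_differentiableAt hdiff

theorem iSup_mem_eq_zero {ι : Type*} {s : Set ι} {f : ι → ℝ} (hf : ∀ i ∈ s, f i = 0) :
    ⨆ i ∈ s, f i = 0 := by
  -- For `i ∉ s` the inner supremum is over an empty type, where it is `0` by convention.
  rw [iSup_congr fun i => iSup_congr (hf i)]
  simp only [Real.iSup_const_zero]

theorem exists_ne_of_w1infDist_pos {θ : ℝ → ℝ} (hpos : 0 < w1infDist θ) :
    ∃ z ∈ Icc (0 : ℝ) 1, θ z ≠ π / 2 := by
  by_contra! hconst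
  have hderiv : ∀ z ∈ Icc (0 : ℝ) 1, deriv θ z = 0 := fun z hz =>
    deriv_eq_zero_of_eqOn_const hconst (uniqueDiffOn_Icc zero_lt_one z hz) hz
  refine hpos.ne' ?_
  rw [w1infDist, iSup_mem_eq_zero fun z hz => by rw [hconst z hz, sub_self, abs_zero],
    iSup_mem_eq_zero fun z hz => by rw [hderiv z hz, abs_zero], add_zero]

theorem halfpi_strict_weak_local_min_general {t : ℝ} (ht : |t| ≤ π) {θ : ℝ → ℝ} (hθ : MemC θ)
    (hne : ∃ z ∈ Icc (0 : ℝ) 1, θ z ≠ π / 2) : 0 < Jfun t θ := by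
  have hsin : ∫ z in (0 : ℝ)..1, sin (θ z - π / 2) ^ 2 < ∫ z in (0 : ℝ)..1, (θ z - π / 2) ^ 2 :=
    integral_sin_sq_lt_integral_sq zero_lt_one (hθ.1.sub continuousOn_const)
      (by simpa only [sub_ne_zero] using hne)
  have hsin_nonneg : 0 ≤ ∫ z in (0 : ℝ)..1, sin (θ z - π / 2) ^ 2 :=
    intervalIntegral.integral_nonneg zero_le_one fun z _ => sq_nonneg _
  rw [hθ.Jfun_eq, sub_pos]
  calc t ^ 2 * ∫ z in (0 : ℝ)..1, sin (θ z - π / 2) ^ 2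
      ≤ π ^ 2 * ∫ z in (0 : ℝ)..1, sin (θ z - π / 2) ^ 2 :=
        mul_le_mul_of_nonneg_right (sq_le_sq.2 (ht.trans (le_abs_self π))) hsin_nonneg
    _ < π ^ 2 * ∫ z in (0 : ℝ)..1, (θ z - π / 2) ^ 2 := by gcongr
    _ ≤ ∫ z in (0 : ℝ)..1, deriv θ z ^ 2 := hθ.pi_sq_mul_integral_sq_le

/-- **Strict weak local minimality of `θ ≡ π/2` for `0 < t < π`.**
There is `ε > 0` such that `J(θ) > 0 = J(π/2)` for every `θ ∈ 𝒞` with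
`0 < ‖θ − π/2‖_{W^{1,∞}} < ε`. -/
theorem halfpi_strict_weak_local_min (t : ℝ) (ht : 0 < t) (htπ : t < π) :
    ∃ ε > (0 : ℝ), ∀ θ : ℝ → ℝ, MemC θ →
      0 < w1infDist θ → w1infDist θ < ε → 0 < Jfun t θ := by
  exact ⟨1, one_pos, fun θ hθ hpos _ => halfpi_strict_weak_local_min_general
    ((abs_of_pos ht).trans_le htπ.le) hθ (exists_ne_of_w1infDist_pos hpos)⟩

end
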